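/- Barrier (bootstrap) lemma for the integral inequality controlling ‖E − I‖: let A > 0, let ε ∈ (0,1], and let T ≥ 0 satisfy 4·A·T ≤ ε. Suppose y : [0,T] → ℝ is continuous, nonnegative, and satisfies y(t) ≤ A·∫₀ᵗ (y(s)² + 1) ds for all t ∈ [0,T]. Then y(t) ≤ ε for all t ∈ [0,T]. -/

import Mathlib

open intervalIntegral

/-! Write `G t = ∫ₐᵗ g`, and suppose that `g ≤ m` as long as `G < ε`, where `∫ₐᵗ m < ε`. The closed
set `{t | G t ≤ ∫ₐᵗ m}` contains the left endpoint and a right neighbourhood of each of its points: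
there `G < ε`, by continuity this persists for a short time, and meanwhile `g ≤ m`. Hence it is the
whole interval.
The barrier lemma is the case `g = A * (y ^ 2 + 1)`, `m = 2 * A`: since `0 ≤ y ≤ G`, the bound
`G < ε ≤ 1` gives `g ≤ m`. -/

open MeasureTheory (volume)
open Set Topology

section Bootstrap

variable {g m : ℝ → ℝ} {a b t u ε : ℝ}

theorem integral_le_integral_of_le_on_Ioo_right (hg : IntervalIntegrable g volume a b)
    (hm : IntervalIntegrable m volume a b) (hat : a ≤ t) (htu : t ≤ u) (hub : u ≤ b)
    (hgm : ∀ s ∈ Ioo t u, g s ≤ m s) (h : ∫ s in a..t, g s ≤ ∫ s in a..t, m s) :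
    ∫ s in a..u, g s ≤ ∫ s in a..u, m s := by
  have ha : a ∈ uIcc a b := left_mem_uIcc
  have ht : t ∈ uIcc a b := mem_uIcc_of_le hat (htu.trans hub)
  have hu : u ∈ uIcc a b := mem_uIcc_of_le (hat.trans htu) hub
  have restrict {f : ℝ → ℝ} (hf : IntervalIntegrable f volume a b) {c d : ℝ}
      (hc : c ∈ uIcc a b) (hd : d ∈ uIcc a b) : IntervalIntegrable f volume c d :=
    hf.mono_set (uIcc_subset_uIcc hc hd)
  calc
    ∫ s in a..u, g s = (∫ s in a..t, g s) + ∫ s in t..u, g s :=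
      (integral_add_adjacent_intervals (restrict hg ha ht) (restrict hg ht hu)).symm
    _ ≤ (∫ s in a..t, m s) + ∫ s in t..u, m s :=
      add_le_add h
        (integral_mono_on_of_le_Ioo htu (restrict hg ht hu) (restrict hm ht hu) hgm)
    _ = ∫ s in a..u, m s :=
      integral_add_adjacent_intervals (restrict hm ha ht) (restrict hm ht hu)

theorem integral_le_integral_of_integral_lt_imp_le (hg : IntervalIntegrable g volume a b)
    (hm : IntervalIntegrable m volume a b) (hmε : ∀ t ∈ Ico a b, ∫ s in a..t, m s < ε)
    (hgm : ∀ t ∈ Ico a b, ∫ s in a..t, g s < ε → g t ≤ m t) :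
    ∀ t ∈ Icc a b, ∫ s in a..t, g s ≤ ∫ s in a..t, m s := by
  intro r hr
  have hab : a ≤ b := hr.1.trans hr.2
  have continuousOn_primitive {f : ℝ → ℝ} (hf : IntervalIntegrable f volume a b) :
      ContinuousOn (fun t ↦ ∫ s in a..t, f s) (Icc a b) :=
    uIcc_of_le hab ▸ continuousOn_primitive_interval' hf left_mem_uIcc
  have hclosed : IsClosed ({t | ∫ s in a..t, g s ≤ ∫ s in a..t, m s} ∩ Icc a b) := by
    rw [inter_comm]
    exact isClosed_Icc.isClosed_le (continuousOn_primitive hg) (continuousOn_primitive hm)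
  refine hclosed.Icc_subset_of_forall_exists_gt (by simp) ?_ hr
  rintro t ⟨hle, ht⟩ v hv
  have hlt : ∀ᶠ u in 𝓝[≥] t, ∫ s in a..u, g s < ε :=
    ((continuousOn_primitive hg t (Ico_subset_Icc_self ht)).mono_of_mem_nhdsWithin
      (Icc_mem_nhdsGE_of_mem ht)).eventually_lt_const (hle.trans_lt (hmε t ht))
  obtain ⟨u, ⟨htu, hu⟩, hsub⟩ :=
    (mem_nhdsGE_iff_exists_mem_Ioc_Ico_subset (lt_min ht.2 hv)).1 hlt
  have hub : u ≤ b := hu.trans (min_le_left b v)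
  exact ⟨u, integral_le_integral_of_le_on_Ioo_right hg hm ht.1 htu.le hub (fun s hs ↦
    hgm s ⟨ht.1.trans hs.1.le, hs.2.trans_le hub⟩ (hsub (Ioo_subset_Ico_self hs))) hle,
    htu, hu.trans (min_le_right b v)⟩

end Bootstrap

theorem barrier_lemma_general {f y : ℝ → ℝ} {A M ε T : ℝ} (hA : 0 ≤ A) (hε : 0 < ε)
    (hTε : A * M * T ≤ ε) (hfM : ∀ x ∈ Ico 0 ε, f x ≤ M)
    (hint : IntervalIntegrable (fun s ↦ f (y s)) volume 0 T)
    (hy0 : ∀ t ∈ Icc 0 T, 0 ≤ y t)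
    (hineq : ∀ t ∈ Icc 0 T, y t ≤ A * ∫ s in (0 : ℝ)..t, f (y s)) :
    ∀ t ∈ Icc 0 T, y t ≤ A * M * t := by
  have hlt : ∀ t ∈ Ico 0 T, ∫ _ in (0 : ℝ)..t, A * M < ε := by
    rintro t ⟨ht0, htT⟩
    rw [integral_const, smul_eq_mul, sub_zero, mul_comm]
    rcases le_or_gt (A * M) 0 with hAM | hAM
    · exact (mul_nonpos_of_nonpos_of_nonneg hAM ht0).trans_lt hε
    · exact (mul_lt_mul_of_pos_left htT hAM).trans_le hTε
  have hle : ∀ t ∈ Ico 0 T, ∫ s in (0 : ℝ)..t, A * f (y s) < ε → A * f (y t) ≤ A * M := by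
    intro t ht h
    rw [integral_const_mul] at h
    have ht' := Ico_subset_Icc_self ht
    exact mul_le_mul_of_nonneg_left (hfM _ ⟨hy0 t ht', (hineq t ht').trans_lt h⟩) hA
  intro t ht
  calc
    y t ≤ ∫ s in (0 : ℝ)..t, A * f (y s) := by
      rw [integral_const_mul]
      exact hineq t ht
    _ ≤ ∫ _ in (0 : ℝ)..t, A * M :=
      integral_le_integral_of_integral_lt_imp_le (hint.const_mul A) intervalIntegrable_const
        hlt hle t ht
    _ = A * M * t := by
      rw [integral_const, smul_eq_mul, sub_zero, mul_comm]

/-- Barrier (bootstrap) lemma for the integral inequality controlling `‖E − I‖`. -/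
theorem barrier_lemma (A ε T : ℝ) (hA : 0 < A) (hε : ε ∈ Set.Ioc (0 : ℝ) 1)
    (hT : 0 ≤ T) (hTε : 4 * A * T ≤ ε)
    (y : ℝ → ℝ) (hy : ContinuousOn y (Set.Icc 0 T))
    (hy0 : ∀ t ∈ Set.Icc 0 T, 0 ≤ y t)
    (hineq : ∀ t ∈ Set.Icc 0 T, y t ≤ A * ∫ s in (0 : ℝ)..t, (y s ^ 2 + 1)) :
    ∀ t ∈ Set.Icc 0 T, y t ≤ ε := by
  intro t ht
  have hlin : y t ≤ A * 2 * t :=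
    barrier_lemma_general (f := fun x ↦ x ^ 2 + 1) hA.le hε.1 (by nlinarith)
      (fun x hx ↦ by nlinarith [hx.1, hx.2, hε.2])
      (((hy.pow 2).add continuousOn_const).intervalIntegrable_of_Icc hT) hy0 hineq t ht
  nlinarith [ht.1, ht.2]
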